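/- arXiv:1012.5268 — 2 statements merged into one kernel-verified Lean document; each statement's English description precedes it below -/
import Mathlib

section
/- The map Φ(x,y) := (2xy, x²+y²−1) sends every (x,y) ∈ (−1,1)² with x ≠ y and x ≠ −y into Ω, and the restriction of Φ to {(x,y) : −1 < x < y < 1, x+y > 0} is a bijection onto Ω. Moreover, for every γ > −1 and every f integrable with respect to W_γ on Ω, ∫_Ω f(u,v) W_γ(u,v) du dv = ∫_{[−1,1]²} f(2xy, x²+y²−1) 𝒲_γ(x,y) dx dy, where 𝒲_γ(x,y) := W_γ(2xy, x²+y²−1) · |x²−y²|. -/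
open MeasureTheory Real Set Filter
open scoped ENNReal

noncomputable section

/-- The parabolic-type domain `Ω`, the image of the triangle `-1 < x < y < 1`
under `(x, y) ↦ (x + y, x y)`. -/
def omegaDom : Set (ℝ × ℝ) :=
  {q | ∃ x y : ℝ, -1 < x ∧ x < y ∧ y < 1 ∧ q = (x + y, x * y)}

/-- The square `[-1,1]²`. -/
def sqDom : Set (ℝ × ℝ) := Icc (-1 : ℝ) 1 ×ˢ Icc (-1 : ℝ) 1

/-- The open triangle `-1 < x < y < 1`. -/
def triDom : Set (ℝ × ℝ) := {q | -1 < q.1 ∧ q.1 < q.2 ∧ q.2 < 1}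

/-- The smaller root `x(u,v)` of `t² - u t + v = 0`. -/
def xRoot (q : ℝ × ℝ) : ℝ := (q.1 - Real.sqrt (q.1 ^ 2 - 4 * q.2)) / 2

/-- The larger root `y(u,v)` of `t² - u t + v = 0`. -/
def yRoot (q : ℝ × ℝ) : ℝ := (q.1 + Real.sqrt (q.1 ^ 2 - 4 * q.2)) / 2

/-- Evaluation of a two-variable polynomial at a point of `ℝ²`. -/
def evalP (P : MvPolynomial (Fin 2) ℝ) (q : ℝ × ℝ) : ℝ :=
  MvPolynomial.eval ![q.1, q.2] P

/-- The space `V_n(W)` of orthogonal polynomials of degree `n` for the weight `W`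
on the domain `D`: polynomials of exact total degree `n` orthogonal to all
polynomials of lower degree. -/
def Vpoly (D : Set (ℝ × ℝ)) (W : ℝ × ℝ → ℝ) (n : ℕ) : Set (MvPolynomial (Fin 2) ℝ) :=
  {P | P.totalDegree = n ∧ ∀ Q : MvPolynomial (Fin 2) ℝ, Q.totalDegree < n →
    (∫ q in D, evalP P q * evalP Q q * W q) = 0}

/-- `Q 0, …, Q n` is an orthonormal basis of `V_n(W)` on `D`. -/
def isONBVn (D : Set (ℝ × ℝ)) (W : ℝ × ℝ → ℝ) (n : ℕ)
    (Q : ℕ → MvPolynomial (Fin 2) ℝ) : Prop :=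
  (∀ k, k ≤ n → Q k ∈ Vpoly D W n) ∧
  (∀ k, k ≤ n → ∀ j, j ≤ n →
    (∫ q in D, evalP (Q k) q * evalP (Q j) q * W q) = if k = j then 1 else 0) ∧
  (∀ R ∈ Vpoly D W n, R ∈ Submodule.span ℝ (Q '' Set.Iic n))

/-- `K` is the reproducing kernel of `Π_n²` in `L²(W)` on the domain `D`:
it is a polynomial function, for each fixed `x ∈ D` it is a polynomial of total
degree `≤ n` in the second variable, and it reproduces every polynomial of total
degree `≤ n`. -/
def IsRK (D : Set (ℝ × ℝ)) (W : ℝ × ℝ → ℝ) (n : ℕ) (K : ℝ × ℝ → ℝ × ℝ → ℝ) : Prop :=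
  (∃ KP : MvPolynomial (Fin 4) ℝ,
    ∀ x y : ℝ × ℝ, K x y = MvPolynomial.eval ![x.1, x.2, y.1, y.2] KP) ∧
  (∀ x ∈ D, ∃ P : MvPolynomial (Fin 2) ℝ, P.totalDegree ≤ n ∧ ∀ y, K x y = evalP P y) ∧
  (∀ P : MvPolynomial (Fin 2) ℝ, P.totalDegree ≤ n →
    ∀ x ∈ D, (∫ y in D, K x y * evalP P y * W y) = evalP P x)

/-- `p` is the sequence of orthonormal polynomials with respect to the weight `w`
on `[-1,1]`: `p n` has degree exactly `n`, positive leading coefficient, and the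
`p n` are orthonormal in `L²(w)`. -/
def IsONPS (w : ℝ → ℝ) (p : ℕ → Polynomial ℝ) : Prop :=
  (∀ n, (p n).natDegree = n) ∧ (∀ n, 0 < (p n).leadingCoeff) ∧
  (∀ n m, (∫ x in Icc (-1:ℝ) 1, (p n).eval x * (p m).eval x * w x)
    = if n = m then 1 else 0)

/-- The Christoffel–Darboux kernel `k_n(x,y) = ∑_{j=0}^n p_j(x) p_j(y)`. -/
def CDK (p : ℕ → Polynomial ℝ) (n : ℕ) (x y : ℝ) : ℝ :=
  ∑ j ∈ Finset.range (n + 1), (p j).eval x * (p j).eval y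

/-- The Jacobi factor `J_{a,b}(x) = (1-x)^a (1+x)^b`. -/
def Jw (a b : ℝ) (x : ℝ) : ℝ := (1 - x) ^ a * (1 + x) ^ b

/-- The factor `J*_{a,b}(u,v) = (1-u+v)^a (1+u+v)^b` on `Ω`. -/
def JstarW (a b : ℝ) (q : ℝ × ℝ) : ℝ := (1 - q.1 + q.2) ^ a * (1 + q.1 + q.2) ^ b

/-- Modulus of continuity of `ψ` on `[-1,1]`. -/
def modCont (ψ : ℝ → ℝ) (t : ℝ) : ℝ :=
  sSup {d : ℝ | ∃ x ∈ Icc (-1:ℝ) 1, ∃ y ∈ Icc (-1:ℝ) 1, |x - y| ≤ t ∧ d = |ψ x - ψ y|}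

/-- The generalized Jacobi class `GJ`. -/
def IsGJ (w : ℝ → ℝ) : Prop :=
  ∃ (r : ℕ) (ψ : ℝ → ℝ) (γ₀ γ₁ : ℝ) (γs xs : Fin r → ℝ),
    -1 < γ₀ ∧ -1 < γ₁ ∧ (∀ i, -1 < γs i) ∧
    StrictMono xs ∧ (∀ i, xs i ∈ Ioo (-1:ℝ) 1) ∧
    ContinuousOn ψ (Icc (-1:ℝ) 1) ∧ (∀ x ∈ Icc (-1:ℝ) 1, 0 < ψ x) ∧
    IntegrableOn (fun t => modCont ψ t / t) (Ioc (0:ℝ) 1) ∧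
    (∀ x : ℝ, |x| ≤ 1 → w x = ψ x * (1 - x) ^ γ₀ * (1 + x) ^ γ₁ * ∏ i, |x - xs i| ^ γs i) ∧
    (∀ x : ℝ, 1 < |x| → w x = 0)

/-- The `L^p`-norm `‖f‖_{w,e}` on `[-1,1]` (as an extended nonnegative real). -/
def lpnormI (w : ℝ → ℝ) (e : ℝ) (f : ℝ → ℝ) : ℝ≥0∞ :=
  (∫⁻ x in Icc (-1:ℝ) 1, ENNReal.ofReal (|f x| ^ e * w x)) ^ (1 / e)

/-- The `L^p`-norm `‖f‖_{W,e}` on a planar domain `D` (as an extended nonnegative real). -/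
def lpnormD (D : Set (ℝ × ℝ)) (W : ℝ × ℝ → ℝ) (e : ℝ) (f : ℝ × ℝ → ℝ) : ℝ≥0∞ :=
  (∫⁻ q in D, ENNReal.ofReal (|f q| ^ e * W q)) ^ (1 / e)

/-- The operator `s_n^{i,j}(w; f, x)` built from the Christoffel–Darboux kernel of the
orthonormal polynomials `pij` of the weight `J_{i,j} w`. -/
def snOp (w : ℝ → ℝ) (pij : ℕ → Polynomial ℝ) (i j : ℝ) (n : ℕ) (f : ℝ → ℝ) (x : ℝ) : ℝ :=
  Jw (i/2) (j/2) x * ∫ y in Icc (-1:ℝ) 1, f y * CDK pij n x y * Jw (i/2) (j/2) y * w y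

/-- Substitution `(x, y) ↦ (2 x y, x² + y² - 1)` on two-variable polynomials. -/
def quadSub (P : MvPolynomial (Fin 2) ℝ) : MvPolynomial (Fin 2) ℝ :=
  MvPolynomial.aeval
    ![2 * MvPolynomial.X 0 * MvPolynomial.X 1,
      MvPolynomial.X 0 ^ 2 + MvPolynomial.X 1 ^ 2 - 1] P

/-- A one-variable polynomial viewed as a polynomial in the first variable. -/
def polyX (q : Polynomial ℝ) : MvPolynomial (Fin 2) ℝ :=
  Polynomial.aeval (MvPolynomial.X 0) q

/-- A one-variable polynomial viewed as a polynomial in the second variable. -/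
def polyY (q : Polynomial ℝ) : MvPolynomial (Fin 2) ℝ :=
  Polynomial.aeval (MvPolynomial.X 1) q

/-!
Put `Φ(x, y) = (2xy, x² + y² - 1)`. If `(u, v) = Φ(x, y)` then `1 ± u + v = (x ± y)²` and
`u² - 4v = 4(1 - x²)(1 - y²)`, so the inequalities cutting out `Ω` are visible in the variables
`x, y`, and on the quarter `|x| < y < 1` of the square `Φ` is inverted by taking the square roots
of `1 ± u + v`. The Jacobian of `Φ` is `4 |x² - y²|`. The map `Φ` and the density `|x² - y²|` are
invariant under the reflections in the two diagonals, which permute the four quarters of the square;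
hence `Φ` pushes `|x² - y²| dx dy` on the square forward to Lebesgue measure on `Ω`.
-/

section Reflection

variable {α β : Type*} [MeasurableSpace α] [MeasurableSpace β] {μ : Measure α} {ν : Measure β}

theorem measurePreserving_withDensity_of_comp_eq {σ : α → β} (hσ : MeasurePreserving σ μ ν)
    {ρ : β → ℝ≥0∞} (hρ : Measurable ρ) {ρ' : α → ℝ≥0∞} (hρσ : ∀ x, ρ (σ x) = ρ' x) :
    MeasurePreserving σ (μ.withDensity ρ') (ν.withDensity ρ) := by
  refine ⟨hσ.measurable, Measure.ext fun s hs => ?_⟩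
  rw [Measure.map_apply hσ.measurable hs, withDensity_apply _ (hσ.measurable hs),
    withDensity_apply _ hs, ← hσ.setLIntegral_comp_preimage hs hρ]
  simp only [hρσ]

theorem map_eq_two_smul_map_restrict {σ : α → α} (hσ : MeasurePreserving σ μ μ)
    {φ : α → β} (hφ : Measurable φ) (hφσ : φ ∘ σ = φ) {A : Set α} (hA : MeasurableSet A)
    (hσA : ∀ᵐ x ∂μ, σ x ∈ A ↔ x ∉ A) : μ.map φ = (2 : ℝ≥0∞) • (μ.restrict A).map φ := by
  have hpre : (σ ⁻¹' A : Set α) =ᵐ[μ] (Aᶜ : Set α) := eventuallyEq_set.2 hσA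
  have hcompl : (μ.restrict Aᶜ).map φ = (μ.restrict A).map φ := by
    rw [← Measure.restrict_congr_set hpre, ← (hσ.restrict_preimage hA).map_eq,
      Measure.map_map hφ hσ.measurable, hφσ]
  conv_lhs => rw [← Measure.restrict_add_restrict_compl (μ := μ) hA]
  rw [Measure.map_add _ _ hφ, hcompl, two_smul]

end Reflection

theorem mem_omegaDom_iff {u v : ℝ} :
    (u, v) ∈ omegaDom ↔ 0 < 1 + u + v ∧ 0 < 1 - u + v ∧ 4 * v < u ^ 2 ∧ |u| < 2 := by
  constructor
  · rintro ⟨x, y, hx, hxy, hy, h⟩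
    obtain ⟨rfl, rfl⟩ := Prod.mk.inj h
    refine ⟨?_, ?_, ?_, abs_lt.2 ⟨by linarith, by linarith⟩⟩
    · nlinarith [mul_pos (show 0 < 1 + x by linarith) (show 0 < 1 + y by linarith)]
    · nlinarith [mul_pos (show 0 < 1 - x by linarith) (show 0 < 1 - y by linarith)]
    · nlinarith [pow_pos (sub_pos.2 hxy) 2]
  · rintro ⟨hplus, hminus, hdisc, hu⟩
    obtain ⟨hu₁, hu₂⟩ := abs_lt.1 hu
    have hs : 0 < √(u ^ 2 - 4 * v) := Real.sqrt_pos.2 (by linarith)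
    have hs_sq : √(u ^ 2 - 4 * v) ^ 2 = u ^ 2 - 4 * v := Real.sq_sqrt (by linarith)
    have hs_left : √(u ^ 2 - 4 * v) < 2 + u :=
      (Real.sqrt_lt' (by linarith)).2 (by linarith)
    have hs_right : √(u ^ 2 - 4 * v) < 2 - u :=
      (Real.sqrt_lt' (by linarith)).2 (by linarith)
    exact ⟨xRoot (u, v), yRoot (u, v), by unfold xRoot; linarith, by unfold xRoot yRoot; linarith,
      by unfold yRoot; linarith, by unfold xRoot yRoot; ext <;> linarith⟩

/-- The quadratic map `Φ(x, y) = (2xy, x² + y² - 1)`. -/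
def quadMap (q : ℝ × ℝ) : ℝ × ℝ := (2 * q.1 * q.2, q.1 ^ 2 + q.2 ^ 2 - 1)

/-- The derivative of `quadMap`, with Jacobian matrix `!![2y, 2x; 2x, 2y]` at `(x, y)`. -/
def quadMapDeriv (q : ℝ × ℝ) : ℝ × ℝ →L[ℝ] ℝ × ℝ :=
  (Matrix.toLin (.finTwoProd ℝ) (.finTwoProd ℝ)
    !![2 * q.2, 2 * q.1; 2 * q.1, 2 * q.2]).toContinuousLinearMap

/-- The quarter `|x| < y < 1` of the square `[-1,1]²`, on which `quadMap` is injective. -/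
def quarterDom : Set (ℝ × ℝ) := {q | -1 < q.1 ∧ q.1 < q.2 ∧ q.2 < 1 ∧ 0 < q.1 + q.2}

/-- The inverse of `quadMap` from `Ω` to `quarterDom`, recovering `x` and `y` from
`√(1 + u + v) = x + y` and `√(1 - u + v) = y - x`. -/
def quadMapInv (q : ℝ × ℝ) : ℝ × ℝ :=
  ((√(1 + q.1 + q.2) - √(1 - q.1 + q.2)) / 2, (√(1 + q.1 + q.2) + √(1 - q.1 + q.2)) / 2)

/-- The measure `|x² - y²| dx dy` on the square `[-1,1]²`. -/
def quadMeasure : Measure (ℝ × ℝ) :=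
  (volume.restrict sqDom).withDensity fun q => ENNReal.ofReal |q.1 ^ 2 - q.2 ^ 2|

theorem quadMap_mem_omegaDom {x y : ℝ} (hx : x ∈ Ioo (-1 : ℝ) 1) (hy : y ∈ Ioo (-1 : ℝ) 1)
    (hne : x ≠ y) (hne_neg : x ≠ -y) : quadMap (x, y) ∈ omegaDom := by
  have hx_sq : x ^ 2 < 1 := (sq_lt_one_iff_abs_lt_one x).2 (abs_lt.2 hx)
  have hy_sq : y ^ 2 < 1 := (sq_lt_one_iff_abs_lt_one y).2 (abs_lt.2 hy)
  have hadd : 0 < (x + y) ^ 2 := by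
    have := (add_eq_zero_iff_eq_neg (a := x) (b := y)).not.2 hne_neg
    positivity
  have hsub : 0 < (x - y) ^ 2 := by
    have := sub_ne_zero.2 hne
    positivity
  refine mem_omegaDom_iff.2 ⟨by linarith, by linarith, ?_, abs_lt.2 ⟨by linarith, by linarith⟩⟩
  linarith [mul_pos (sub_pos.2 hx_sq) (sub_pos.2 hy_sq)]

theorem mapsTo_quadMap : MapsTo quadMap quarterDom omegaDom := by
  rintro ⟨x, y⟩ ⟨hx, hxy, hy, hadd⟩
  dsimp only at hx hxy hy hadd
  exact quadMap_mem_omegaDom ⟨hx, by linarith⟩ ⟨by linarith, hy⟩ hxy.ne (by linarith)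

theorem mapsTo_quadMapInv : MapsTo quadMapInv omegaDom quarterDom := by
  rintro ⟨u, v⟩ h
  obtain ⟨hplus, hminus, hdisc, hu⟩ := mem_omegaDom_iff.1 h
  have hA : 0 < √(1 + u + v) := Real.sqrt_pos.2 hplus
  have hB : 0 < √(1 - u + v) := Real.sqrt_pos.2 hminus
  have hA_sq : √(1 + u + v) ^ 2 = 1 + u + v := Real.sq_sqrt hplus.le
  have hB_sq : √(1 - u + v) ^ 2 = 1 - u + v := Real.sq_sqrt hminus.le
  have hu_sq : u ^ 2 < 2 ^ 2 := sq_lt_sq.2 (by simpa using hu)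
  have hmul : √(1 + u + v) * √(1 - u + v) < 1 - v := by
    rw [← Real.sqrt_mul hplus.le]
    exact (Real.sqrt_lt' (by linarith)).2 (by linarith)
  have hadd : √(1 + u + v) + √(1 - u + v) < 2 :=
    lt_of_pow_lt_pow_left₀ 2 zero_le_two (by linarith)
  unfold quadMapInv
  refine ⟨?_, ?_, ?_, ?_⟩ <;> dsimp only <;> linarith

theorem invOn_quadMapInv_quadMap : InvOn quadMapInv quadMap quarterDom omegaDom := by
  constructor
  · rintro ⟨x, y⟩ ⟨-, hxy, -, hadd⟩
    dsimp only at hxy hadd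
    have hplus : √(1 + 2 * x * y + (x ^ 2 + y ^ 2 - 1)) = x + y := by
      rw [← Real.sqrt_sq hadd.le]
      ring_nf
    have hminus : √(1 - 2 * x * y + (x ^ 2 + y ^ 2 - 1)) = y - x := by
      rw [← Real.sqrt_sq (sub_nonneg.2 hxy.le)]
      ring_nf
    simp only [quadMap, quadMapInv, hplus, hminus]
    ext <;> ring
  · rintro ⟨u, v⟩ h
    obtain ⟨hplus, hminus, -, -⟩ := mem_omegaDom_iff.1 h
    have hA_sq : √(1 + u + v) ^ 2 = 1 + u + v := Real.sq_sqrt hplus.le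
    have hB_sq : √(1 - u + v) ^ 2 = 1 - u + v := Real.sq_sqrt hminus.le
    unfold quadMap quadMapInv
    ext <;> dsimp only <;> linarith

theorem bijOn_quadMap : BijOn quadMap quarterDom omegaDom :=
  invOn_quadMapInv_quadMap.bijOn mapsTo_quadMap mapsTo_quadMapInv

theorem measurable_quadMap : Measurable quadMap := by
  unfold quadMap
  fun_prop

theorem quadMap_swap (q : ℝ × ℝ) : quadMap q.swap = quadMap q := by
  ext <;> simp only [quadMap, Prod.fst_swap, Prod.snd_swap] <;> ring

theorem quadMap_neg (q : ℝ × ℝ) : quadMap (-q) = quadMap q := by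
  ext <;> simp only [quadMap, Prod.fst_neg, Prod.snd_neg] <;> ring

theorem hasFDerivAt_quadMap (q : ℝ × ℝ) : HasFDerivAt quadMap (quadMapDeriv q) q := by
  have hfst : HasFDerivAt Prod.fst (ContinuousLinearMap.fst ℝ ℝ ℝ) q := hasFDerivAt_fst
  have hsnd : HasFDerivAt Prod.snd (ContinuousLinearMap.snd ℝ ℝ ℝ) q := hasFDerivAt_snd
  have hderiv := ((hfst.const_mul 2).mul hsnd).prodMk (((hfst.pow 2).add (hsnd.pow 2)).sub_const 1)
  refine hderiv.congr_fderiv ?_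
  rw [quadMapDeriv, Matrix.toLin_finTwoProd_toContinuousLinearMap]
  ext <;> simp [mul_comm]

theorem abs_det_quadMapDeriv (q : ℝ × ℝ) : |(quadMapDeriv q).det| = 4 * |q.1 ^ 2 - q.2 ^ 2| := by
  have hdet : (quadMapDeriv q).det = -4 * (q.1 ^ 2 - q.2 ^ 2) := by
    simp only [quadMapDeriv, LinearMap.det_toContinuousLinearMap, LinearMap.det_toLin,
      Matrix.det_fin_two_of]
    ring
  rw [hdet, abs_mul, abs_neg, abs_of_pos (four_pos : (0 : ℝ) < 4)]

theorem measurableSet_quarterDom : MeasurableSet quarterDom := by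
  unfold quarterDom
  measurability

theorem measurableSet_sqDom : MeasurableSet sqDom := measurableSet_Icc.prod measurableSet_Icc

theorem measurable_ofReal_abs_sq_sub_sq :
    Measurable fun q : ℝ × ℝ => ENNReal.ofReal |q.1 ^ 2 - q.2 ^ 2| := by
  fun_prop

theorem ae_quadMeasure_sq_ne_sq : ∀ᵐ q ∂quadMeasure, q.1 ^ 2 ≠ q.2 ^ 2 := by
  refine (ae_withDensity_iff measurable_ofReal_abs_sq_sub_sq).2 (ae_of_all _ fun q hq heq => hq ?_)
  simp [heq]

theorem measurePreserving_quadMeasure {σ : ℝ × ℝ → ℝ × ℝ} (hσ : MeasurePreserving σ volume volume)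
    (hsq : σ ⁻¹' sqDom = sqDom)
    (habs : ∀ q, |(σ q).1 ^ 2 - (σ q).2 ^ 2| = |q.1 ^ 2 - q.2 ^ 2|) :
    MeasurePreserving σ quadMeasure quadMeasure := by
  have hrestrict := hσ.restrict_preimage measurableSet_sqDom
  rw [hsq] at hrestrict
  exact measurePreserving_withDensity_of_comp_eq hrestrict measurable_ofReal_abs_sq_sub_sq
    fun q => congrArg ENNReal.ofReal (habs q)

theorem measurePreserving_swap_quadMeasure :
    MeasurePreserving Prod.swap quadMeasure quadMeasure :=
  measurePreserving_quadMeasure Measure.measurePreserving_swap (preimage_swap_prod _ _)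
    fun _ => abs_sub_comm _ _

theorem measurePreserving_neg_quadMeasure :
    MeasurePreserving (fun q : ℝ × ℝ => -q) quadMeasure quadMeasure := by
  refine measurePreserving_quadMeasure (Measure.measurePreserving_neg volume) ?_
    fun q => by simp only [Prod.fst_neg, Prod.snd_neg, neg_sq]
  ext q
  simp only [sqDom, mem_preimage, mem_prod, ← abs_le, mem_Icc, Prod.fst_neg, Prod.snd_neg, abs_neg]

theorem map_quadMap_quadMeasure_eq_two_smul :
    quadMeasure.map quadMap
      = (2 : ℝ≥0∞) • (quadMeasure.restrict {q | q.1 < q.2}).map quadMap := by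
  refine map_eq_two_smul_map_restrict measurePreserving_swap_quadMeasure measurable_quadMap
    (funext quadMap_swap) (measurableSet_lt measurable_fst measurable_snd) ?_
  filter_upwards [ae_quadMeasure_sq_ne_sq] with q hq
  have hne : q.1 ≠ q.2 := fun h => hq (by rw [h])
  exact ⟨fun h => not_lt_of_gt h, fun h => (not_lt.1 h).lt_of_ne hne.symm⟩

theorem measurePreserving_neg_swap_restrict_quadMeasure :
    MeasurePreserving (fun q : ℝ × ℝ => -q.swap) (quadMeasure.restrict {q | q.1 < q.2})
      (quadMeasure.restrict {q | q.1 < q.2}) := by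
  have hpre : (fun q : ℝ × ℝ => -q.swap) ⁻¹' {q | q.1 < q.2} = {q | q.1 < q.2} := by
    ext q
    exact neg_lt_neg_iff (a := q.2) (b := q.1)
  have hrestrict := (measurePreserving_neg_quadMeasure.comp
    measurePreserving_swap_quadMeasure).restrict_preimage
      (measurableSet_lt measurable_fst measurable_snd)
  rwa [show (fun q : ℝ × ℝ => -q) ∘ Prod.swap = fun q => -q.swap from rfl, hpre] at hrestrict

theorem map_quadMap_restrict_quadMeasure_eq_two_smul :
    (quadMeasure.restrict {q | q.1 < q.2}).map quadMap
      = (2 : ℝ≥0∞) •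
        (quadMeasure.restrict ({q | 0 < q.1 + q.2} ∩ {q | q.1 < q.2})).map quadMap := by
  have hmeas : MeasurableSet {q : ℝ × ℝ | 0 < q.1 + q.2} :=
    measurableSet_lt measurable_const (measurable_fst.add measurable_snd)
  rw [← Measure.restrict_restrict hmeas]
  refine map_eq_two_smul_map_restrict measurePreserving_neg_swap_restrict_quadMeasure
    measurable_quadMap (funext fun q => (quadMap_neg _).trans (quadMap_swap q)) hmeas ?_
  filter_upwards [ae_restrict_of_ae ae_quadMeasure_sq_ne_sq] with q hq
  have hne : q.1 + q.2 ≠ 0 := fun h => hq (by rw [eq_neg_of_add_eq_zero_left h, neg_sq])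
  simp only [Prod.fst_neg, Prod.snd_neg, Prod.fst_swap, Prod.snd_swap]
  refine ⟨fun h => by linarith, fun h => ?_⟩
  linarith [(not_lt.1 h).lt_of_ne hne]

theorem inter_sqDom_ae_eq_quarterDom :
    ({q | 0 < q.1 + q.2} ∩ {q | q.1 < q.2} ∩ sqDom : Set (ℝ × ℝ)) =ᵐ[volume] quarterDom := by
  have hsnd : ∀ᵐ q : ℝ × ℝ, q.2 ≠ 1 :=
    Measure.quasiMeasurePreserving_snd.ae (Measure.ae_ne volume (1 : ℝ))
  refine eventuallyEq_set.2 ?_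
  filter_upwards [hsnd] with q hq
  constructor
  · rintro ⟨⟨hadd, hlt⟩, -, -, hy⟩
    have hy' : q.2 < 1 := hy.lt_of_ne hq
    exact ⟨by linarith [show 0 < q.1 + q.2 from hadd], hlt, hy', hadd⟩
  · rintro ⟨hx, hlt, hy, hadd⟩
    exact ⟨⟨hadd, hlt⟩, ⟨hx.le, (hlt.trans hy).le⟩, (hx.trans hlt).le, hy.le⟩

theorem four_smul_restrict_quadMeasure :
    (4 : ℝ≥0∞) • quadMeasure.restrict ({q | 0 < q.1 + q.2} ∩ {q | q.1 < q.2})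
      = (volume.restrict quarterDom).withDensity fun q =>
          ENNReal.ofReal |(quadMapDeriv q).det| := by
  rw [quadMeasure, restrict_withDensity', Measure.restrict_restrict',
    Measure.restrict_congr_set inter_sqDom_ae_eq_quarterDom,
    ← withDensity_smul _ measurable_ofReal_abs_sq_sub_sq]
  · congr with q
    simp [abs_det_quadMapDeriv, ENNReal.ofReal_mul]
  · exact measurableSet_sqDom

theorem measurePreserving_quadMap :
    MeasurePreserving quadMap quadMeasure (volume.restrict omegaDom) := by
  refine ⟨measurable_quadMap, ?_⟩
  calc quadMeasure.map quadMap
      = ((4 : ℝ≥0∞) • quadMeasure.restrict ({q | 0 < q.1 + q.2} ∩ {q | q.1 < q.2})).map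
          quadMap := by
        rw [map_quadMap_quadMeasure_eq_two_smul, map_quadMap_restrict_quadMeasure_eq_two_smul,
          smul_smul, Measure.map_smul]
        norm_num
    _ = volume.restrict (quadMap '' quarterDom) := by
        rw [four_smul_restrict_quadMeasure]
        exact map_withDensity_abs_det_fderiv_eq_addHaar volume
          measurableSet_quarterDom.nullMeasurableSet
          (fun q _ => (hasFDerivAt_quadMap q).hasFDerivWithinAt) bijOn_quadMap.injOn
    _ = volume.restrict omegaDom := by rw [bijOn_quadMap.image_eq]

section Integral

variable {E : Type*} [NormedAddCommGroup E] [NormedSpace ℝ E] {g : ℝ × ℝ → E}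

theorem integrable_quadMeasure_iff :
    Integrable g quadMeasure ↔ IntegrableOn (fun q => |q.1 ^ 2 - q.2 ^ 2| • g q) sqDom := by
  rw [quadMeasure, integrable_withDensity_iff_integrable_smul' measurable_ofReal_abs_sq_sub_sq
    (ae_of_all _ fun _ => ENNReal.ofReal_lt_top)]
  simp only [ENNReal.toReal_ofReal (abs_nonneg _), IntegrableOn]

theorem integral_quadMeasure :
    ∫ q, g q ∂quadMeasure = ∫ q in sqDom, |q.1 ^ 2 - q.2 ^ 2| • g q := by
  rw [quadMeasure, integral_withDensity_eq_integral_toReal_smul measurable_ofReal_abs_sq_sub_sq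
    (ae_of_all _ fun _ => ENNReal.ofReal_lt_top)]
  simp only [ENNReal.toReal_ofReal (abs_nonneg _)]

theorem integrableOn_smul_comp_quadMap (hg : IntegrableOn g omegaDom) :
    IntegrableOn (fun q => |q.1 ^ 2 - q.2 ^ 2| • g (quadMap q)) sqDom :=
  integrable_quadMeasure_iff.1 (measurePreserving_quadMap.integrable_comp_of_integrable hg)

theorem setIntegral_omegaDom_eq_setIntegral_sqDom (hg : IntegrableOn g omegaDom) :
    ∫ q in omegaDom, g q = ∫ q in sqDom, |q.1 ^ 2 - q.2 ^ 2| • g (quadMap q) := by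
  rw [IntegrableOn, ← measurePreserving_quadMap.map_eq] at hg
  rw [← integral_quadMeasure, ← measurePreserving_quadMap.map_eq,
    integral_map measurable_quadMap.aemeasurable hg.aestronglyMeasurable]

end Integral

theorem stmt_1_general (E : Type*) [NormedAddCommGroup E] [NormedSpace ℝ E] :
    (∀ x y : ℝ, x ∈ Ioo (-1 : ℝ) 1 → y ∈ Ioo (-1 : ℝ) 1 → x ≠ y → x ≠ -y →
      quadMap (x, y) ∈ omegaDom) ∧
    BijOn quadMap quarterDom omegaDom ∧
    ∀ g : ℝ × ℝ → E, IntegrableOn g omegaDom →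
      IntegrableOn (fun q => |q.1 ^ 2 - q.2 ^ 2| • g (quadMap q)) sqDom ∧
      ∫ q in omegaDom, g q = ∫ q in sqDom, |q.1 ^ 2 - q.2 ^ 2| • g (quadMap q) :=
  ⟨fun _ _ => quadMap_mem_omegaDom, bijOn_quadMap, fun _ hg =>
    ⟨integrableOn_smul_comp_quadMap hg, setIntegral_omegaDom_eq_setIntegral_sqDom hg⟩⟩

/-- the quadratic map `Φ(x,y) = (2xy, x²+y²-1)` maps into `Ω`, is a
bijection from `{-1 < x < y < 1, x + y > 0}` onto `Ω`, and transfers the weight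
`W_γ` on `Ω` to `𝒲_γ` on `[-1,1]²`. -/
theorem stmt_1
    (w : ℝ → ℝ) (hw0 : ∀ x, 0 ≤ w x)
    (hwi : IntegrableOn w (Icc (-1:ℝ) 1))
    (hw1 : (∫ x in Icc (-1:ℝ) 1, w x) = 1)
    (hwm : ∀ k : ℕ, IntegrableOn (fun x => x ^ k * w x) (Icc (-1:ℝ) 1))
    (γ : ℝ) (hγ : -1 < γ)
    (a : ℝ) (ha0 : 0 < a)
    (ha : (∫ q in sqDom, a * w q.1 * w q.2 * |q.1 - q.2| ^ (2 * γ + 1)) = 1)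
    (W : ℝ × ℝ → ℝ)
    (hW : ∀ q : ℝ × ℝ, W q = 2 * a * w (xRoot q) * w (yRoot q) * (q.1 ^ 2 - 4 * q.2) ^ γ)
    (CW : ℝ × ℝ → ℝ)
    (hCW : ∀ x y : ℝ, CW (x, y) = W (2*x*y, x^2 + y^2 - 1) * |x^2 - y^2|) :
    (∀ x y : ℝ, x ∈ Ioo (-1:ℝ) 1 → y ∈ Ioo (-1:ℝ) 1 → x ≠ y → x ≠ -y →
      (2*x*y, x^2 + y^2 - 1) ∈ omegaDom) ∧
    Set.BijOn (fun q : ℝ × ℝ => (2*q.1*q.2, q.1^2 + q.2^2 - 1))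
      {q : ℝ × ℝ | -1 < q.1 ∧ q.1 < q.2 ∧ q.2 < 1 ∧ 0 < q.1 + q.2} omegaDom ∧
    (∀ f : ℝ × ℝ → ℝ, IntegrableOn (fun q => f q * W q) omegaDom →
      (∫ q in omegaDom, f q * W q)
        = ∫ q in sqDom, f (2*q.1*q.2, q.1^2 + q.2^2 - 1) * CW q) := by
  obtain ⟨hmaps, hbij, hint⟩ := stmt_1_general ℝ
  refine ⟨hmaps, hbij, fun f hf => (hint _ hf).2.trans (integral_congr_ae (ae_of_all _ ?_))⟩
  exact fun q => by simp only [quadMap, hCW, smul_eq_mul]; ring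
end
end

section
/- For 0 ≤ k ≤ n there exists a (necessarily unique) real polynomial P_{k,n} in two variables of total degree n such that P_{k,n}(x+y, xy) = (1/√2)(p_n(x) p_k(y) + p_n(y) p_k(x)) for all x, y when k < n, and P_{n,n}(x+y, xy) = p_n(x) p_n(y). These polynomials satisfy ∫_Ω P_{k,n}(u,v) P_{j,m}(u,v) W_{−1/2}(u,v) du dv = δ_{k,j} δ_{n,m} for all 0 ≤ k ≤ n, 0 ≤ j ≤ m; in particular, for each n, {P_{k,n} : 0 ≤ k ≤ n} is an orthonormal basis of V_n(W_{−1/2}). -/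
open MeasureTheory Real Set Filter
open scoped ENNReal

noncomputable section

/-!
The symmetrization `f(x) g(y) + f(y) g(x)` is a polynomial `symProd f g` in `u = x + y`, `v = x y`,
and it is bilinear in `(f, g)`. The `symProd f g` with `deg f, deg g ≤ n` span exactly the
polynomials of total degree at most `n`, because multiplication by `u` or `v` raises both degrees
by at most one. The substitution `(x, y) ↦ (x + y, x y)` has Jacobian `y - x` on `x < y`, which
cancels `(u² - 4 v)^(-1/2)`, so `∫_Ω symProd f g · W_{-1/2} = 2 (∫ f w) (∫ g w)`. As a product of
two symmetrizations is a sum of two symmetrizations, orthonormality and the basis property both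
reduce to the orthonormality of `(p_n)`.
-/

section SymProd
open MvPolynomial

lemma totalDegree_X_mul_le {R σ : Type*} [CommSemiring R] (i : σ) (P : MvPolynomial σ R) :
    (X i * P).totalDegree ≤ P.totalDegree + 1 :=
  (totalDegree_mul _ _).trans <| by
    rw [add_comm]
    exact Nat.add_le_add_left (isHomogeneous_X R i).totalDegree_le _

section CommRing

variable {R : Type*} [CommRing R]

/-- The power sum `x ^ m + y ^ m` as a polynomial in `x + y` (variable `0`) and `x * y`
(variable `1`). -/
def powerSum : ℕ → MvPolynomial (Fin 2) R
  | 0 => 2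
  | 1 => X 0
  | m + 2 => X 0 * powerSum (m + 1) - X 1 * powerSum m

lemma eval_powerSum (m : ℕ) (x y : R) :
    eval ![x + y, x * y] (powerSum m) = x ^ m + y ^ m := by
  induction m using Nat.twoStepInduction with
  | zero => simpa [powerSum] using one_add_one_eq_two.symm
  | one => simp [powerSum]
  | more m ih ih' =>
    simp only [powerSum, map_sub, map_mul, ih, ih', eval_X, Matrix.cons_val_zero,
      Matrix.cons_val_one]
    ring

lemma totalDegree_powerSum_le (m : ℕ) : (powerSum m : MvPolynomial (Fin 2) R).totalDegree ≤ m := by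
  induction m using Nat.twoStepInduction with
  | zero => simp [powerSum, ← map_ofNat (C (σ := Fin 2) (R := R))]
  | one => exact (isHomogeneous_X R 0).totalDegree_le
  | more m ih ih' =>
    have h₀ := totalDegree_X_mul_le 0 (powerSum (m + 1) : MvPolynomial (Fin 2) R)
    have h₁ := totalDegree_X_mul_le 1 (powerSum m : MvPolynomial (Fin 2) R)
    exact (totalDegree_sub _ _).trans (max_le (by lia) (by lia))

/-- The symmetrized monomial `x ^ i * y ^ j + x ^ j * y ^ i` as a polynomial in `x + y` and
`x * y`. -/
def symMonomial : ℕ → ℕ → MvPolynomial (Fin 2) R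
  | i + 1, j + 1 => X 1 * symMonomial i j
  | i + 1, 0 => powerSum (i + 1)
  | 0, j => powerSum j

lemma eval_symMonomial (i j : ℕ) (x y : R) :
    eval ![x + y, x * y] (symMonomial i j) = x ^ i * y ^ j + y ^ i * x ^ j := by
  induction i generalizing j with
  | zero => simp [symMonomial, eval_powerSum, add_comm]
  | succ i ih =>
    cases j with
    | zero => simp [symMonomial, eval_powerSum]
    | succ j =>
      simp only [symMonomial, map_mul, ih, eval_X, Matrix.cons_val_one, Matrix.cons_val_fin_one]
      ring

lemma totalDegree_symMonomial_le (i j : ℕ) :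
    (symMonomial i j : MvPolynomial (Fin 2) R).totalDegree ≤ max i j := by
  induction i generalizing j with
  | zero => simpa [symMonomial] using totalDegree_powerSum_le j
  | succ i ih =>
    cases j with
    | zero =>
      simpa only [symMonomial, max_eq_left (Nat.zero_le _)] using totalDegree_powerSum_le (i + 1)
    | succ j =>
      have h := totalDegree_X_mul_le 1 (symMonomial i j : MvPolynomial (Fin 2) R)
      have := ih j
      rw [symMonomial]
      lia

/-- The symmetrized product `f(x) g(y) + f(y) g(x)` as a polynomial in `x + y` and `x * y`,
bilinear in `f` and `g`. -/
def symProd : Polynomial R →ₗ[R] Polynomial R →ₗ[R] MvPolynomial (Fin 2) R :=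
  (Polynomial.basisMonomials R).constr R fun i =>
    (Polynomial.basisMonomials R).constr R (symMonomial i)

lemma symProd_X_pow (i j : ℕ) :
    symProd (Polynomial.X ^ i : Polynomial R) (Polynomial.X ^ j) = symMonomial i j := by
  have basis_eq (m : ℕ) : Polynomial.basisMonomials R m = Polynomial.X ^ m := by
    rw [Polynomial.coe_basisMonomials, Polynomial.X_pow_eq_monomial]
  rw [symProd, ← basis_eq, ← basis_eq, Module.Basis.constr_basis, Module.Basis.constr_basis]

lemma eval_symProd (f g : Polynomial R) (x y : R) :
    eval ![x + y, x * y] (symProd f g) = f.eval x * g.eval y + f.eval y * g.eval x := by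
  induction f using Polynomial.induction_on' with
  | add f₁ f₂ h₁ h₂ =>
    simp only [map_add, LinearMap.add_apply, h₁, h₂, Polynomial.eval_add]
    ring
  | monomial i a =>
    induction g using Polynomial.induction_on' with
    | add g₁ g₂ h₁ h₂ =>
      simp only [map_add, h₁, h₂, Polynomial.eval_add]
      ring
    | monomial j b =>
      simp only [← Polynomial.smul_X_eq_monomial, map_smul, LinearMap.smul_apply, symProd_X_pow,
        smul_eval, eval_symMonomial, Polynomial.eval_smul, Polynomial.eval_pow, Polynomial.eval_X,
        smul_eq_mul]
      ring

lemma map₂_symProd_degreeLE_le (n : ℕ) :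
    Submodule.map₂ symProd (Polynomial.degreeLE R n) (Polynomial.degreeLE R n) ≤
      restrictTotalDegree (Fin 2) R n := by
  classical
  rw [Polynomial.degreeLE_eq_span_X_pow, Submodule.map₂_span_span, Submodule.span_le]
  rintro _ ⟨f, hf, g, hg, rfl⟩
  simp only [Finset.coe_image, Finset.coe_range, mem_image, mem_Iio] at hf hg
  obtain ⟨⟨i, hi, rfl⟩, j, hj, rfl⟩ := And.intro hf hg
  simp only [SetLike.mem_coe, mem_restrictTotalDegree, symProd_X_pow]
  exact (totalDegree_symMonomial_le i j).trans (by lia)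

section Infinite

variable [IsDomain R] [Infinite R]

lemma ext_eval_add_mul {P Q : MvPolynomial (Fin 2) R}
    (h : ∀ x y, eval ![x + y, x * y] P = eval ![x + y, x * y] Q) : P = Q := by
  refine esymmAlgHom_fin_injective R (le_refl 2) (Subtype.ext (MvPolynomial.funext fun z => ?_))
  have esymm_two : esymm (Fin 2) R 2 = X 0 * X 1 := by
    rw [esymm, (by decide : Finset.powersetCard 2 (Finset.univ : Finset (Fin 2)) = {Finset.univ}),
      Finset.sum_singleton, Fin.prod_univ_two]
  have aeval_esymm : (fun i : Fin 2 => aeval z (esymm (Fin 2) R (i + 1))) =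
      ![z 0 + z 1, z 0 * z 1] := by
    ext i
    fin_cases i <;> simp [esymm_two]
  have eval_esymmAlgHom (T : MvPolynomial (Fin 2) R) :
      eval z (esymmAlgHom (Fin 2) R 2 T : MvPolynomial (Fin 2) R) =
        eval ![z 0 + z 1, z 0 * z 1] T := by
    rw [esymmAlgHom_apply, ← aeval_eq_eval, comp_aeval_apply, aeval_esymm, aeval_eq_eval]
  rw [eval_esymmAlgHom, eval_esymmAlgHom, h]

lemma symProd_comm (f g : Polynomial R) : symProd f g = symProd g f :=
  ext_eval_add_mul fun x y => by simp only [eval_symProd]; ring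

lemma symProd_mul_symProd (f g h k : Polynomial R) :
    symProd f g * symProd h k = symProd (f * h) (g * k) + symProd (f * k) (g * h) :=
  ext_eval_add_mul fun x y => by
    simp only [map_mul, map_add, eval_symProd, Polynomial.eval_mul]; ring

lemma X_zero_mul_symProd (f g : Polynomial R) :
    X 0 * symProd f g = symProd (Polynomial.X * f) g + symProd f (Polynomial.X * g) :=
  ext_eval_add_mul fun x y => by
    simp only [map_mul, map_add, eval_symProd, Polynomial.eval_mul, Polynomial.eval_X, eval_X,
      Matrix.cons_val_zero]
    ring

lemma X_one_mul_symProd (f g : Polynomial R) :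
    X 1 * symProd f g = symProd (Polynomial.X * f) (Polynomial.X * g) :=
  ext_eval_add_mul fun x y => by
    simp only [map_mul, eval_symProd, Polynomial.eval_mul, Polynomial.eval_X, eval_X,
      Matrix.cons_val_one, Matrix.cons_val_fin_one]
    ring

lemma symProd_one_one : symProd (1 : Polynomial R) 1 = 2 :=
  ext_eval_add_mul fun x y => by simp [eval_symProd, one_add_one_eq_two]

lemma X_mul_mem_map₂_symProd_degreeLE {n : ℕ} {P : MvPolynomial (Fin 2) R}
    (hP : P ∈ Submodule.map₂ symProd (Polynomial.degreeLE R n) (Polynomial.degreeLE R n))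
    (i : Fin 2) :
    X i * P ∈ Submodule.map₂ symProd (Polynomial.degreeLE R (n + 1 : ℕ))
      (Polynomial.degreeLE R (n + 1 : ℕ)) := by
  have degreeLE_le : Polynomial.degreeLE R n ≤ Polynomial.degreeLE R (n + 1 : ℕ) :=
    Polynomial.degreeLE_mono (by exact_mod_cast n.le_succ)
  have X_mul_mem {f : Polynomial R} (hf : f ∈ Polynomial.degreeLE R n) :
      Polynomial.X * f ∈ Polynomial.degreeLE R (n + 1 : ℕ) := by
    rw [Polynomial.mem_degreeLE] at hf ⊢
    rw [mul_comm, Polynomial.degree_mul_X]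
    push_cast
    gcongr
  suffices h : Submodule.map₂ symProd (Polynomial.degreeLE R n) (Polynomial.degreeLE R n) ≤
      (Submodule.map₂ symProd (Polynomial.degreeLE R (n + 1 : ℕ))
        (Polynomial.degreeLE R (n + 1 : ℕ))).comap (LinearMap.mulLeft R (X i)) from h hP
  refine Submodule.map₂_le.2 fun f hf g hg => ?_
  rw [Submodule.mem_comap, LinearMap.mulLeft_apply]
  fin_cases i
  · exact X_zero_mul_symProd f g ▸ add_mem
      (Submodule.apply_mem_map₂ _ (X_mul_mem hf) (degreeLE_le hg))
      (Submodule.apply_mem_map₂ _ (degreeLE_le hf) (X_mul_mem hg))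
  · exact X_one_mul_symProd f g ▸ Submodule.apply_mem_map₂ _ (X_mul_mem hf) (X_mul_mem hg)

end Infinite
end CommRing

section Field

variable {K : Type*} [Field K] [Infinite K] [NeZero (2 : K)]

lemma X_pow_mul_X_pow_mem_map₂_symProd_degreeLE (a b : ℕ) :
    X 0 ^ a * X 1 ^ b ∈ Submodule.map₂ symProd (Polynomial.degreeLE K (a + b : ℕ))
      (Polynomial.degreeLE K (a + b : ℕ)) := by
  induction a with
  | zero =>
    induction b with
    | zero =>
      have one_mem : (1 : Polynomial K) ∈ Polynomial.degreeLE K (0 + 0 : ℕ) :=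
        Polynomial.mem_degreeLE.2 Polynomial.degree_one_le
      have h := Submodule.smul_mem _ (2⁻¹ : K) (Submodule.apply_mem_map₂ symProd one_mem one_mem)
      have two_eq : (2 : MvPolynomial (Fin 2) K) = (2 : K) • 1 := by
        rw [smul_eq_C_mul, mul_one, map_ofNat]
      rw [symProd_one_one, two_eq, inv_smul_smul₀ two_ne_zero] at h
      simpa only [pow_zero, mul_one] using h
    | succ b ih =>
      simpa only [pow_zero, one_mul, zero_add, pow_succ'] using
        X_mul_mem_map₂_symProd_degreeLE ih 1
  | succ a ih =>
    simpa only [pow_succ', mul_assoc, add_right_comm a 1 b] using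
      X_mul_mem_map₂_symProd_degreeLE ih 0

lemma map₂_symProd_degreeLE (n : ℕ) :
    Submodule.map₂ symProd (Polynomial.degreeLE K n) (Polynomial.degreeLE K n) =
      restrictTotalDegree (Fin 2) K n := by
  refine (map₂_symProd_degreeLE_le n).antisymm fun P hP => ?_
  rw [mem_restrictTotalDegree] at hP
  rw [P.as_sum]
  refine Submodule.sum_mem _ fun d hd => ?_
  have hdn : d 0 + d 1 ≤ n := by
    have := (le_totalDegree hd).trans hP
    rwa [Finsupp.sum_fintype _ _ (fun _ => rfl), Fin.sum_univ_two] at this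
  have degreeLE_le : Polynomial.degreeLE K (d 0 + d 1 : ℕ) ≤ Polynomial.degreeLE K n :=
    Polynomial.degreeLE_mono (by exact_mod_cast hdn)
  rw [monomial_eq, Finsupp.prod_fintype _ _ (fun _ => pow_zero _), Fin.prod_univ_two,
    ← smul_eq_C_mul]
  exact Submodule.smul_mem _ _ (Submodule.map₂_le_map₂ degreeLE_le degreeLE_le
    (X_pow_mul_X_pow_mem_map₂_symProd_degreeLE (d 0) (d 1)))

end Field
end SymProd

section OrthogonalSpan

variable {R V ι : Type*} [CommRing R] [NoZeroDivisors R] [AddCommGroup V] [Module R V]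

lemma mem_span_image_diff_of_forall_eq_zero (B : V →ₗ[R] V →ₗ[R] R) {e : ι → V} {S T : Set ι}
    (hTS : T ⊆ S) (horth : S.Pairwise fun i j => B (e i) (e j) = 0)
    (hne : ∀ i ∈ T, B (e i) (e i) ≠ 0) {x : V} (hx : x ∈ Submodule.span R (e '' S))
    (hxT : ∀ i ∈ T, B x (e i) = 0) : x ∈ Submodule.span R (e '' (S \ T)) := by
  rw [Finsupp.mem_span_image_iff_linearCombination] at hx ⊢
  obtain ⟨c, hcS, rfl⟩ := hx
  refine ⟨c, fun i hi => ⟨hcS hi, fun hiT => Finsupp.mem_support_iff.1 hi ?_⟩, rfl⟩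
  have coeff_mul : B (Finsupp.linearCombination R e c) (e i) = c i * B (e i) (e i) := by
    rw [Finsupp.linearCombination_apply, Finsupp.sum, map_sum, LinearMap.sum_apply,
      Finset.sum_eq_single_of_mem i hi fun j hj hji => ?_]
    · rw [map_smul, LinearMap.smul_apply, smul_eq_mul]
    · rw [map_smul, LinearMap.smul_apply, horth (hcS hj) (hTS hiT) hji, smul_zero]
  exact (mul_eq_zero.1 (coeff_mul ▸ hxT i hiT)).resolve_right (hne i hiT)

end OrthogonalSpan

section ChangeOfVariables

lemma xRoot_add_mul {x y : ℝ} (hxy : x ≤ y) : xRoot (x + y, x * y) = x := by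
  have discrim_eq : (x + y) ^ 2 - 4 * (x * y) = (y - x) ^ 2 := by ring
  rw [xRoot, discrim_eq, Real.sqrt_sq (sub_nonneg.2 hxy)]
  ring

lemma yRoot_add_mul {x y : ℝ} (hxy : x ≤ y) : yRoot (x + y, x * y) = y := by
  have discrim_eq : (x + y) ^ 2 - 4 * (x * y) = (y - x) ^ 2 := by ring
  rw [yRoot, discrim_eq, Real.sqrt_sq (sub_nonneg.2 hxy)]
  ring

lemma injOn_add_mul : InjOn (fun q : ℝ × ℝ => (q.1 + q.2, q.1 * q.2)) {q | q.1 ≤ q.2} :=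
  LeftInvOn.injOn (f₁' := fun q => (xRoot q, yRoot q)) fun _ hq =>
    Prod.ext (xRoot_add_mul hq) (yRoot_add_mul hq)

lemma hasFDerivAt_add_mul (q : ℝ × ℝ) :
    HasFDerivAt (fun q : ℝ × ℝ => (q.1 + q.2, q.1 * q.2))
      (Matrix.toLin (.finTwoProd ℝ) (.finTwoProd ℝ) !![1, 1; q.2, q.1]).toContinuousLinearMap
      q := by
  rw [Matrix.toLin_finTwoProd_toContinuousLinearMap]
  have h_fst : HasFDerivAt Prod.fst (ContinuousLinearMap.fst ℝ ℝ ℝ) q := hasFDerivAt_fst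
  have h_snd : HasFDerivAt Prod.snd (ContinuousLinearMap.snd ℝ ℝ ℝ) q := hasFDerivAt_snd
  convert! (h_fst.fun_add h_snd).prodMk (h_fst.mul h_snd) using 2
  · simp
  · simp [add_comm]

lemma setIntegral_image_add_mul {E : Type*} [NormedAddCommGroup E] [NormedSpace ℝ E]
    {S : Set (ℝ × ℝ)} (hS : MeasurableSet S) (hle : ∀ q ∈ S, q.1 ≤ q.2) (g : ℝ × ℝ → E) :
    ∫ q in (fun q : ℝ × ℝ => (q.1 + q.2, q.1 * q.2)) '' S, g q =
      ∫ q in S, (q.2 - q.1) • g (q.1 + q.2, q.1 * q.2) := by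
  rw [integral_image_eq_integral_abs_det_fderiv_smul volume hS
    (fun q _ => (hasFDerivAt_add_mul q).hasFDerivWithinAt) (injOn_add_mul.mono hle)]
  refine setIntegral_congr_fun hS fun q hq => ?_
  have abs_det : |q.1 - q.2| = q.2 - q.1 := by
    rw [abs_sub_comm, abs_of_nonneg (sub_nonneg.2 (hle q hq))]
  simp [LinearMap.det_toLin, Matrix.det_fin_two_of, abs_det]

lemma omegaDom_eq_image_triDom :
    omegaDom = (fun q : ℝ × ℝ => (q.1 + q.2, q.1 * q.2)) '' triDom := by
  ext q
  simp only [omegaDom, triDom, mem_image, Prod.exists, mem_ofPred_eq, and_assoc, eq_comm]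

end ChangeOfVariables

section SymmetricIntegral

variable {α : Type*} [LinearOrder α] [TopologicalSpace α] [OrderClosedTopology α]
  [SecondCountableTopology α] [MeasurableSpace α] [OpensMeasurableSpace α]
  {μ : Measure α} [SFinite μ] [NullSingletonClass μ]

lemma ae_fst_ne_snd : ∀ᵐ q ∂μ.prod μ, q.1 ≠ q.2 := by
  have measurableSet_diagonal : MeasurableSet {q : α × α | q.1 = q.2} :=
    measurableSet_eq_fun measurable_fst measurable_snd
  simp only [ae_iff, not_not]
  refine (Measure.measure_prod_null measurableSet_diagonal).2 (.of_forall fun x => ?_)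
  simp

lemma integral_prod_eq_two_smul_setIntegral_lt {E : Type*} [NormedAddCommGroup E]
    [NormedSpace ℝ E] {G : α × α → E} (hG : Integrable G (μ.prod μ))
    (hsymm : ∀ q, G q.swap = G q) :
    ∫ q, G q ∂μ.prod μ = (2 : ℝ) • ∫ q in {q | q.1 < q.2}, G q ∂μ.prod μ := by
  have hlt : MeasurableSet {q : α × α | q.1 < q.2} := measurableSet_lt measurable_fst measurable_snd
  have compl_ae_eq : ({q : α × α | q.1 < q.2}ᶜ : Set (α × α)) =ᵐ[μ.prod μ]
      Prod.swap ⁻¹' {q | q.1 < q.2} := by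
    filter_upwards [ae_fst_ne_snd (μ := μ)] with q hq
    exact propext (not_lt.trans hq.symm.le_iff_lt)
  have setIntegral_compl : ∫ q in {q | q.1 < q.2}ᶜ, G q ∂μ.prod μ =
      ∫ q in {q | q.1 < q.2}, G q ∂μ.prod μ := by
    rw [setIntegral_congr_set compl_ae_eq]
    simpa only [hsymm] using Measure.measurePreserving_swap.setIntegral_preimage_emb
      MeasurableEquiv.prodComm.measurableEmbedding G {q | q.1 < q.2}
  rw [← integral_add_compl hlt hG, setIntegral_compl, two_smul]

end SymmetricIntegral

section WeightedIntegral

/-- Lebesgue measure on `[-1, 1]`. -/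
abbrev volumeIcc : Measure ℝ := volume.restrict (Icc (-1) 1)

/-- The weight `W_{-1/2}` on `Ω` attached to the weight `w` on `[-1, 1]`. -/
def weightNegHalf (w : ℝ → ℝ) (q : ℝ × ℝ) : ℝ :=
  2 * w (xRoot q) * w (yRoot q) * (q.1 ^ 2 - 4 * q.2) ^ (-(1 / 2) : ℝ)

lemma measurableSet_triDom : MeasurableSet triDom :=
  (measurableSet_lt measurable_const measurable_fst).inter
    ((measurableSet_lt measurable_fst measurable_snd).inter
      (measurableSet_lt measurable_snd measurable_const))

lemma volumeIcc_prod_restrict_lt :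
    (volumeIcc.prod volumeIcc).restrict {q | q.1 < q.2} = volume.restrict triDom := by
  have triDom_eq : triDom = {q | q.1 < q.2} ∩ Ioo (-1) 1 ×ˢ Ioo (-1) 1 := by
    ext q
    simp only [triDom, mem_ofPred_eq, mem_inter_iff, mem_prod, mem_Ioo]
    grind
  rw [volumeIcc, ← restrict_Ioo_eq_restrict_Icc, Measure.prod_restrict,
    Measure.restrict_restrict (measurableSet_lt measurable_fst measurable_snd), triDom_eq,
    Measure.volume_eq_prod]

lemma sub_mul_weightNegHalf (w : ℝ → ℝ) {x y : ℝ} (hxy : x < y) :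
    (y - x) * weightNegHalf w (x + y, x * y) = 2 * (w x * w y) := by
  have hpos : 0 < y - x := sub_pos.2 hxy
  have discrim_eq : (x + y) ^ 2 - 4 * (x * y) = (y - x) ^ 2 := by ring
  have rpow_eq : ((y - x) ^ 2) ^ (-(1 / 2) : ℝ) = (y - x)⁻¹ := by
    rw [Real.rpow_neg (sq_nonneg _), ← Real.sqrt_eq_rpow, Real.sqrt_sq hpos.le]
  simp only [weightNegHalf, xRoot_add_mul hxy.le, yRoot_add_mul hxy.le, discrim_eq, rpow_eq]
  field_simp

lemma setIntegral_omegaDom_mul_weightNegHalf {w : ℝ → ℝ} {F : ℝ × ℝ → ℝ}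
    (hF : Integrable (fun q => F (q.1 + q.2, q.1 * q.2) * (w q.1 * w q.2))
      (volumeIcc.prod volumeIcc)) :
    ∫ q in omegaDom, F q * weightNegHalf w q =
      ∫ q, F (q.1 + q.2, q.1 * q.2) * (w q.1 * w q.2) ∂volumeIcc.prod volumeIcc := by
  rw [omegaDom_eq_image_triDom, setIntegral_image_add_mul measurableSet_triDom
      (fun _ hq => hq.2.1.le), integral_prod_eq_two_smul_setIntegral_lt hF fun q => by
        simp only [Prod.fst_swap, Prod.snd_swap, add_comm, mul_comm],
    volumeIcc_prod_restrict_lt, ← integral_smul]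
  refine setIntegral_congr_fun measurableSet_triDom fun q hq => ?_
  have h := sub_mul_weightNegHalf w hq.2.1
  simp only [smul_eq_mul]
  linear_combination F (q.1 + q.2, q.1 * q.2) * h

lemma integrable_continuous_mul_weight {w : ℝ → ℝ} (hw : Integrable w volumeIcc)
    {F : ℝ × ℝ → ℝ} (hF : Continuous F) :
    Integrable (fun q => F q * (w q.1 * w q.2)) (volumeIcc.prod volumeIcc) := by
  have hww := hw.mul_prod hw
  rw [Measure.prod_restrict] at hww ⊢
  exact IntegrableOn.continuousOn_mul hF.continuousOn hww (isCompact_Icc.prod isCompact_Icc)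

lemma continuous_evalP (P : MvPolynomial (Fin 2) ℝ) : Continuous (evalP P) :=
  (MvPolynomial.continuous_eval P).comp <| by fun_prop

lemma integrable_evalP_add_mul_weight {w : ℝ → ℝ} (hw : Integrable w volumeIcc)
    (P : MvPolynomial (Fin 2) ℝ) :
    Integrable (fun q => evalP P (q.1 + q.2, q.1 * q.2) * (w q.1 * w q.2))
      (volumeIcc.prod volumeIcc) :=
  integrable_continuous_mul_weight hw ((continuous_evalP P).comp (by fun_prop))

/-- Integration over `Ω` against `W_{-1/2}`, as a linear functional on polynomials. -/
def omegaFunctional {w : ℝ → ℝ} (hw : Integrable w volumeIcc) :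
    MvPolynomial (Fin 2) ℝ →ₗ[ℝ] ℝ where
  toFun P := ∫ q in omegaDom, evalP P q * weightNegHalf w q
  map_add' P Q := by
    simp only [setIntegral_omegaDom_mul_weightNegHalf (integrable_evalP_add_mul_weight hw _)]
    rw [← integral_add (integrable_evalP_add_mul_weight hw P)
      (integrable_evalP_add_mul_weight hw Q)]
    simp only [evalP, map_add, add_mul]
  map_smul' c P := by
    simp only [evalP, MvPolynomial.smul_eval, mul_assoc, integral_const_mul, RingHom.id_apply,
      smul_eq_mul]

lemma omegaFunctional_apply {w : ℝ → ℝ} (hw : Integrable w volumeIcc)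
    (P : MvPolynomial (Fin 2) ℝ) :
    omegaFunctional hw P = ∫ q in omegaDom, evalP P q * weightNegHalf w q :=
  rfl

lemma omegaFunctional_symProd {w : ℝ → ℝ} (hw : Integrable w volumeIcc) (f g : Polynomial ℝ) :
    omegaFunctional hw (symProd f g) =
      2 * ((∫ x, f.eval x * w x ∂volumeIcc) * ∫ x, g.eval x * w x ∂volumeIcc) := by
  have integrand_eq (q : ℝ × ℝ) :
      evalP (symProd f g) (q.1 + q.2, q.1 * q.2) * (w q.1 * w q.2) =
        (f.eval q.1 * g.eval q.2) * (w q.1 * w q.2) +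
          (g.eval q.1 * f.eval q.2) * (w q.1 * w q.2) := by
    rw [evalP, eval_symProd]; ring
  have integral_eq (f g : Polynomial ℝ) :
      ∫ q : ℝ × ℝ, (f.eval q.1 * g.eval q.2) * (w q.1 * w q.2) ∂volumeIcc.prod volumeIcc =
        (∫ x, f.eval x * w x ∂volumeIcc) * ∫ x, g.eval x * w x ∂volumeIcc := by
    rw [← integral_prod_mul]
    simp only [mul_mul_mul_comm]
  rw [omegaFunctional_apply,
    setIntegral_omegaDom_mul_weightNegHalf (integrable_evalP_add_mul_weight hw _)]
  simp only [integrand_eq]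
  rw [integral_add (integrable_continuous_mul_weight hw (by fun_prop))
    (integrable_continuous_mul_weight hw (by fun_prop)), integral_eq, integral_eq]
  ring

end WeightedIntegral

section OrthonormalBasis

/-- The polynomial `P_{k,n}` (for `k ≤ n`) built from the orthonormal polynomials `p`. -/
def symONP (p : ℕ → Polynomial ℝ) (k n : ℕ) : MvPolynomial (Fin 2) ℝ :=
  (if k = n then 1 / 2 else (√2)⁻¹) • symProd (p n) (p k)

lemma evalP_symONP_of_lt (p : ℕ → Polynomial ℝ) {k n : ℕ} (hk : k < n) (x y : ℝ) :
    evalP (symONP p k n) (x + y, x * y) =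
      (√2)⁻¹ * ((p n).eval x * (p k).eval y + (p n).eval y * (p k).eval x) := by
  rw [evalP, symONP, if_neg hk.ne, MvPolynomial.smul_eval, eval_symProd]

lemma evalP_symONP_self (p : ℕ → Polynomial ℝ) (n : ℕ) (x y : ℝ) :
    evalP (symONP p n n) (x + y, x * y) = (p n).eval x * (p n).eval y := by
  rw [evalP, symONP, if_pos rfl, MvPolynomial.smul_eval, eval_symProd]
  ring

/-- The pairs `(k, m)` with `k ≤ m < n`, which index the basis `P_{k,m}` of the polynomials of
total degree less than `n`. -/
def pairsBelow (n : ℕ) : Set (ℕ × ℕ) := {i | i.1 ≤ i.2 ∧ i.2 < n}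

lemma restrictTotalDegree_le_span_symONP {p : ℕ → Polynomial ℝ} (hp : ∀ n, (p n).degree = n)
    (n : ℕ) :
    MvPolynomial.restrictTotalDegree (Fin 2) ℝ n ≤
      Submodule.span ℝ ((fun i => symONP p i.1 i.2) '' pairsBelow (n + 1)) := by
  have span_eq : Submodule.span ℝ (p '' Iic n) = Polynomial.degreeLE ℝ n :=
    (Polynomial.Sequence.mk p hp).span_degreeLE fun i _ => isUnit_iff_ne_zero.2 <|
      Polynomial.leadingCoeff_ne_zero.2 (Polynomial.Sequence.ne_zero _ i)
  have symProd_mem {i j : ℕ} (hij : j ≤ i) (hi : i ≤ n) : symProd (p i) (p j) ∈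
      Submodule.span ℝ ((fun i => symONP p i.1 i.2) '' pairsBelow (n + 1)) := by
    have coeff_ne_zero : (if j = i then 1 / 2 else (√2)⁻¹ : ℝ) ≠ 0 := by
      split_ifs <;> positivity
    rw [← Submodule.smul_mem_iff _ coeff_ne_zero]
    exact Submodule.subset_span ⟨(j, i), ⟨hij, Nat.lt_succ_of_le hi⟩, rfl⟩
  rw [← map₂_symProd_degreeLE, ← span_eq, Submodule.map₂_span_span, Submodule.span_le]
  rintro _ ⟨_, ⟨i, hi, rfl⟩, _, ⟨j, hj, rfl⟩, rfl⟩
  rcases le_total j i with hij | hij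
  · exact symProd_mem hij hi
  · beta_reduce
    rw [SetLike.mem_coe, symProd_comm]
    exact symProd_mem hij hj

lemma totalDegree_symONP_le {p : ℕ → Polynomial ℝ} (hp : ∀ n, (p n).degree = n) {k n : ℕ}
    (hk : k ≤ n) : (symONP p k n).totalDegree ≤ n := by
  have mem_degreeLE {i : ℕ} (hi : i ≤ n) : p i ∈ Polynomial.degreeLE ℝ n :=
    Polynomial.mem_degreeLE.2 ((hp i).trans_le (by exact_mod_cast hi))
  rw [← MvPolynomial.mem_restrictTotalDegree, symONP]
  exact Submodule.smul_mem _ _ (map₂_symProd_degreeLE_le n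
    (Submodule.apply_mem_map₂ _ (mem_degreeLE le_rfl) (mem_degreeLE hk)))

variable {w : ℝ → ℝ} {p : ℕ → Polynomial ℝ}

lemma IsONPS.degree_eq (hp : IsONPS w p) (n : ℕ) : (p n).degree = n := by
  rw [Polynomial.degree_eq_natDegree (Polynomial.leadingCoeff_ne_zero.1 (hp.2.1 n).ne'), hp.1]

lemma omegaFunctional_symProd_mul_symProd (hw : Integrable w volumeIcc) (hp : IsONPS w p)
    (n k m j : ℕ) :
    omegaFunctional hw (symProd (p n) (p k) * symProd (p m) (p j)) =
      2 * ((if n = m then 1 else 0) * (if k = j then 1 else 0) +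
        (if n = j then 1 else 0) * (if k = m then 1 else 0)) := by
  simp only [symProd_mul_symProd, map_add, omegaFunctional_symProd, Polynomial.eval_mul, hp.2.2]
  ring

lemma omegaFunctional_symONP_mul_symONP (hw : Integrable w volumeIcc) (hp : IsONPS w p)
    {n k m j : ℕ} (hk : k ≤ n) (hj : j ≤ m) :
    omegaFunctional hw (symONP p k n * symONP p j m) = if k = j ∧ n = m then 1 else 0 := by
  have sqrt_two_inv_sq : (√2)⁻¹ * (√2)⁻¹ = (1 / 2 : ℝ) := by
    rw [← mul_inv, Real.mul_self_sqrt zero_le_two, one_div]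
  rw [symONP, symONP, smul_mul_smul_comm, map_smul, omegaFunctional_symProd_mul_symProd hw hp,
    smul_eq_mul]
  by_cases h : k = j ∧ n = m
  · obtain ⟨rfl, rfl⟩ := h
    by_cases hkn : k = n
    · subst hkn; norm_num
    · simp [hkn, Ne.symm hkn, sqrt_two_inv_sq]
  · have h_same : ¬(n = m ∧ k = j) := fun h' => h h'.symm
    have h_cross : ¬(n = j ∧ k = m) := by lia
    simp only [ite_zero_mul_ite_zero, if_neg h, if_neg h_same, if_neg h_cross, add_zero, mul_zero]

lemma omegaFunctional_symONP_mul_of_totalDegree_lt (hw : Integrable w volumeIcc)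
    (hp : IsONPS w p) {k n : ℕ} (hk : k ≤ n) {Q : MvPolynomial (Fin 2) ℝ}
    (hQ : Q.totalDegree < n) : omegaFunctional hw (symONP p k n * Q) = 0 := by
  obtain ⟨m, rfl⟩ := Nat.exists_eq_add_one_of_ne_zero hQ.ne_bot
  have span_le_ker : Submodule.span ℝ ((fun i => symONP p i.1 i.2) '' pairsBelow (m + 1)) ≤
      LinearMap.ker (omegaFunctional hw ∘ₗ LinearMap.mulLeft ℝ (symONP p k (m + 1))) := by
    rw [Submodule.span_le]
    rintro _ ⟨i, ⟨hi, him⟩, rfl⟩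
    simp only [SetLike.mem_coe, LinearMap.mem_ker, LinearMap.comp_apply, LinearMap.mulLeft_apply]
    rw [omegaFunctional_symONP_mul_symONP hw hp hk hi, if_neg (by lia)]
  exact span_le_ker (restrictTotalDegree_le_span_symONP hp.degree_eq m
    ((MvPolynomial.mem_restrictTotalDegree _ _ _).2 (Nat.lt_succ_iff.1 hQ)))

-- A polynomial of lower degree would be orthogonal to itself.
lemma totalDegree_symONP (hw : Integrable w volumeIcc) (hp : IsONPS w p) {k n : ℕ}
    (hk : k ≤ n) : (symONP p k n).totalDegree = n := by
  refine (totalDegree_symONP_le hp.degree_eq hk).antisymm (not_lt.1 fun hlt => ?_)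
  have h := omegaFunctional_symONP_mul_of_totalDegree_lt hw hp hk hlt
  rw [omegaFunctional_symONP_mul_symONP hw hp hk hk, if_pos ⟨rfl, rfl⟩] at h
  exact one_ne_zero h

lemma setIntegral_evalP_mul_evalP (hw : Integrable w volumeIcc) (P Q : MvPolynomial (Fin 2) ℝ) :
    ∫ q in omegaDom, evalP P q * evalP Q q * weightNegHalf w q = omegaFunctional hw (P * Q) := by
  simp only [omegaFunctional_apply, evalP, map_mul]

lemma mem_span_symONP_of_mem_Vpoly (hw : Integrable w volumeIcc) (hp : IsONPS w p) {n : ℕ}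
    {P : MvPolynomial (Fin 2) ℝ} (hP : P ∈ Vpoly omegaDom (weightNegHalf w) n) :
    P ∈ Submodule.span ℝ ((fun k => symONP p k n) '' Iic n) := by
  obtain ⟨hdeg, horth⟩ := hP
  have image_diff : (fun i : ℕ × ℕ => symONP p i.1 i.2) '' (pairsBelow (n + 1) \ pairsBelow n) =
      (fun k => symONP p k n) '' Iic n := by
    have diff_eq : pairsBelow (n + 1) \ pairsBelow n = (fun k => (k, n)) '' Iic n := by
      ext ⟨k, m⟩
      simp only [pairsBelow, Set.mem_sdiff, mem_ofPred_eq, mem_image, mem_Iic, Prod.mk.injEq]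
      grind
    rw [diff_eq, image_image]
  rw [← image_diff]
  refine mem_span_image_diff_of_forall_eq_zero (S := pairsBelow (n + 1)) (T := pairsBelow n)
    ((LinearMap.mul ℝ (MvPolynomial (Fin 2) ℝ)).compr₂ (omegaFunctional hw))
    (fun i hi => ⟨hi.1, hi.2.trans n.lt_succ_self⟩) (fun i hi j hj hij => ?_) (fun i hi => ?_)
    (restrictTotalDegree_le_span_symONP hp.degree_eq n
      ((MvPolynomial.mem_restrictTotalDegree _ _ _).2 hdeg.le)) (fun i hi => ?_)
  · exact (omegaFunctional_symONP_mul_symONP hw hp hi.1 hj.1).trans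
      (if_neg fun h => hij (Prod.ext h.1 h.2))
  · have h := omegaFunctional_symONP_mul_symONP hw hp hi.1 hi.1
    rw [if_pos ⟨rfl, rfl⟩] at h
    exact h.trans_ne one_ne_zero
  · rw [LinearMap.compr₂_apply, LinearMap.mul_apply', ← setIntegral_evalP_mul_evalP]
    exact horth _ ((totalDegree_symONP hw hp hi.1).trans_lt hi.2)

lemma isONBVn_symONP (hw : Integrable w volumeIcc) (hp : IsONPS w p) (n : ℕ) :
    isONBVn omegaDom (weightNegHalf w) n (fun k => symONP p k n) := by
  refine ⟨fun k hk => ⟨totalDegree_symONP hw hp hk, fun Q hQ => ?_⟩, fun k hk j hj => ?_,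
    fun P hP => mem_span_symONP_of_mem_Vpoly hw hp hP⟩
  · rw [setIntegral_evalP_mul_evalP hw, omegaFunctional_symONP_mul_of_totalDegree_lt hw hp hk hQ]
  · rw [setIntegral_evalP_mul_evalP hw, omegaFunctional_symONP_mul_symONP hw hp hk hj]
    simp only [and_true]

end OrthonormalBasis

theorem stmt_2_general
    (w : ℝ → ℝ) (hwi : IntegrableOn w (Icc (-1 : ℝ) 1))
    (p : ℕ → Polynomial ℝ) (hp : IsONPS w p)
    (W : ℝ × ℝ → ℝ)
    (hW : ∀ q : ℝ × ℝ, W q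
      = 2 * w (xRoot q) * w (yRoot q) * (q.1 ^ 2 - 4 * q.2) ^ (-(1/2) : ℝ)) :
    ∃ P : ℕ → ℕ → MvPolynomial (Fin 2) ℝ,
      (∀ n k, k ≤ n → (P k n).totalDegree = n) ∧
      (∀ n k, k < n → ∀ x y : ℝ,
        evalP (P k n) (x + y, x * y)
          = (Real.sqrt 2)⁻¹ * ((p n).eval x * (p k).eval y + (p n).eval y * (p k).eval x)) ∧
      (∀ n, ∀ x y : ℝ,
        evalP (P n n) (x + y, x * y) = (p n).eval x * (p n).eval y) ∧
      (∀ n k m j, k ≤ n → j ≤ m →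
        (∫ q in omegaDom, evalP (P k n) q * evalP (P j m) q * W q)
          = if k = j ∧ n = m then 1 else 0) ∧
      (∀ n, isONBVn omegaDom W n (fun k => P k n)) ∧
      (∀ P' : ℕ → ℕ → MvPolynomial (Fin 2) ℝ,
        (∀ n k, k ≤ n → (P' k n).totalDegree = n) →
        (∀ n k, k < n → ∀ x y : ℝ,
          evalP (P' k n) (x + y, x * y)
            = (Real.sqrt 2)⁻¹ * ((p n).eval x * (p k).eval y + (p n).eval y * (p k).eval x)) →
        (∀ n, ∀ x y : ℝ,
          evalP (P' n n) (x + y, x * y) = (p n).eval x * (p n).eval y) →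
        ∀ n k, k ≤ n → P' k n = P k n) := by
  obtain rfl : W = weightNegHalf w := funext hW
  refine ⟨symONP p, fun n k hk => totalDegree_symONP hwi hp hk,
    fun n k hk => evalP_symONP_of_lt p hk, evalP_symONP_self p, fun n k m j hk hj => ?_,
    isONBVn_symONP hwi hp, fun P' _ h_lt h_self n k hk => ext_eval_add_mul fun x y => ?_⟩
  · rw [setIntegral_evalP_mul_evalP hwi, omegaFunctional_symONP_mul_symONP hwi hp hk hj]
  · rcases hk.eq_or_lt with rfl | hk
    · exact (h_self k x y).trans (evalP_symONP_self p k x y).symm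
    · exact (h_lt n k hk x y).trans (evalP_symONP_of_lt p hk x y).symm

/-- the explicit orthonormal basis of `V_n(W_{-1/2})` on `Ω` built
from the orthonormal polynomials `p_n` of `w`. -/
theorem stmt_2
    (w : ℝ → ℝ) (hw0 : ∀ x, 0 ≤ w x)
    (hwi : IntegrableOn w (Icc (-1:ℝ) 1))
    (hw1 : (∫ x in Icc (-1:ℝ) 1, w x) = 1)
    (hwm : ∀ k : ℕ, IntegrableOn (fun x => x ^ k * w x) (Icc (-1:ℝ) 1))
    (p : ℕ → Polynomial ℝ) (hp : IsONPS w p)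
    (W : ℝ × ℝ → ℝ)
    (hW : ∀ q : ℝ × ℝ, W q
      = 2 * w (xRoot q) * w (yRoot q) * (q.1 ^ 2 - 4 * q.2) ^ (-(1/2) : ℝ)) :
    ∃ P : ℕ → ℕ → MvPolynomial (Fin 2) ℝ,
      (∀ n k, k ≤ n → (P k n).totalDegree = n) ∧
      (∀ n k, k < n → ∀ x y : ℝ,
        evalP (P k n) (x + y, x * y)
          = (Real.sqrt 2)⁻¹ * ((p n).eval x * (p k).eval y + (p n).eval y * (p k).eval x)) ∧
      (∀ n, ∀ x y : ℝ,
        evalP (P n n) (x + y, x * y) = (p n).eval x * (p n).eval y) ∧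
      (∀ n k m j, k ≤ n → j ≤ m →
        (∫ q in omegaDom, evalP (P k n) q * evalP (P j m) q * W q)
          = if k = j ∧ n = m then 1 else 0) ∧
      (∀ n, isONBVn omegaDom W n (fun k => P k n)) ∧
      (∀ P' : ℕ → ℕ → MvPolynomial (Fin 2) ℝ,
        (∀ n k, k ≤ n → (P' k n).totalDegree = n) →
        (∀ n k, k < n → ∀ x y : ℝ,
          evalP (P' k n) (x + y, x * y)
            = (Real.sqrt 2)⁻¹ * ((p n).eval x * (p k).eval y + (p n).eval y * (p k).eval x)) →
        (∀ n, ∀ x y : ℝ,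
          evalP (P' n n) (x + y, x * y) = (p n).eval x * (p n).eval y) →
        ∀ n k, k ≤ n → P' k n = P k n) :=
  stmt_2_general w hwi p hp W hW
end
end
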